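/- Let δ be the least ordinal with X_δ = X_{δ+1}. Then δ has uncountable cofinality; in particular, for every strictly increasing sequence ⟨α_n⟩_{n∈ℕ} of ordinals below δ one has sup_n α_n < δ. -/

import Mathlib

open Set Topology

noncomputable section

/-- A set is an `Fσ` set if it is a countable union of closed sets. -/
def IsFSigma {X : Type*} [TopologicalSpace X] (s : Set X) : Prop :=
  ∃ F : ℕ → Set X, (∀ n, IsClosed (F n)) ∧ s = ⋃ n, F n

/-- A topological space is an `F`-space if any two disjoint open `Fσ` subsets
have disjoint closures. -/
def IsFSpace (X : Type*) [TopologicalSpace X] : Prop :=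
  ∀ s t : Set X, IsOpen s → IsOpen t → IsFSigma s → IsFSigma t → Disjoint s t →
    Disjoint (closure s) (closure t)

/-- `𝐒 = ℕ × [0,1]²` where `ℕ` is discrete and `[0,1]` is the unit interval. -/
abbrev bS : Type := ℕ × (unitInterval × unitInterval)

/-- `βπ : β𝐒 → βℕ`, the Stone–Čech extension of the projection `π(n,x,y) = n`. -/
def betaPi : StoneCech bS → StoneCech ℕ :=
  stoneCechExtend (continuous_stoneCechUnit.comp continuous_fst)

/-- `βf : β𝐒 → [0,1]`, the Stone–Čech extension of `f(n,x,y) = x`. -/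
def betaF : StoneCech bS → unitInterval :=
  stoneCechExtend (continuous_fst.comp continuous_snd)

/-- `S_u = βπ⁻¹(u)`, as a subset of `β𝐒` (carrying the subspace topology). -/
def Su (u : StoneCech ℕ) : Set (StoneCech bS) := betaPi ⁻¹' {u}

/-- `f_u : S_u → [0,1]`, the restriction of `βf` to `S_u`. -/
def fu (u : StoneCech ℕ) : (Su u) → unitInterval := fun z => betaF z.1

/-- `L_t = f_u⁻¹(t) ∩ cl_{S_u} f_u⁻¹([0,t))`. -/
def Lset (u : StoneCech ℕ) (t : unitInterval) : Set (Su u) :=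
  fu u ⁻¹' {t} ∩ closure (fu u ⁻¹' (Set.Ico 0 t))

/-- `R_t = f_u⁻¹(t) ∩ cl_{S_u} f_u⁻¹((t,1])`. -/
def Rset (u : StoneCech ℕ) (t : unitInterval) : Set (Su u) :=
  fu u ⁻¹' {t} ∩ closure (fu u ⁻¹' (Set.Ioc t 1))

/-- The rectangle `P_{s,r} = S_u ∩ cl_{β𝐒}(ℕ × [s,r] × I)`, viewed as a subset of `S_u`. -/
def Pset (u : StoneCech ℕ) (s r : unitInterval) : Set (Su u) :=
  Subtype.val ⁻¹' closure (stoneCechUnit '' {p : bS | p.2.1 ∈ Set.Icc s r})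

/-- `L_{s,t} = cl_{S_u}(⋃_{s<r<t} P_{s,r})`. -/
def Lst (u : StoneCech ℕ) (s t : unitInterval) : Set (Su u) :=
  closure (⋃ r ∈ Set.Ioo s t, Pset u s r)

/-- The interior of `B` in the subspace `A`, viewed as a subset of the ambient space. -/
def relInt {Y : Type*} [TopologicalSpace Y] (A B : Set Y) : Set Y :=
  Subtype.val '' interior ((Subtype.val : A → Y) ⁻¹' B)

/-- The transfinite sequence `X_α ⊆ S_u`: `X_0 = S_u`,
`X_{α+1} = X_α \ ⋃_{t} Int_{X_α}(X_α ∩ f_u⁻¹(t))`, and `X_λ = ⋂_{β<λ} X_β` at limits. -/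
def Xseq (u : StoneCech ℕ) : Ordinal → Set (Su u) := fun α =>
  Ordinal.limitRecOn α Set.univ
    (fun _ Xa => Xa \ ⋃ t : unitInterval, relInt Xa (Xa ∩ fu u ⁻¹' {t}))
    (fun o _ ih => ⋂ (β : {β : Ordinal // β < o}), ih β.1 β.2)

/-- The bottom line `B_u = S_u ∩ cl_{β𝐒}(ℕ × I × {0})`, viewed as a subset of `S_u`. -/
def Bu (u : StoneCech ℕ) : Set (Su u) :=
  Subtype.val ⁻¹' closure (stoneCechUnit '' {p : bS | p.2.2 = 0})

/-- The top line `T_u = S_u ∩ cl_{β𝐒}(ℕ × I × {1})`, viewed as a subset of `S_u`. -/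
def Tu (u : StoneCech ℕ) : Set (Su u) :=
  Subtype.val ⁻¹' closure (stoneCechUnit '' {p : bS | p.2.2 = 1})

theorem Xseq_zero (u : StoneCech ℕ) : Xseq u 0 = Set.univ := by
  simp [Xseq]

theorem mem_relInt_iff {Y : Type*} [TopologicalSpace Y] (A B : Set Y) (x : Y) :
    x ∈ relInt A B ↔ x ∈ A ∧ ∃ U : Set Y, IsOpen U ∧ x ∈ U ∧ U ∩ A ⊆ B := by
  unfold relInt
  constructor
  · rintro ⟨z, hz, rfl⟩
    refine ⟨z.2, ?_⟩
    rw [mem_interior] at hz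
    obtain ⟨V, hVB, hV, hzV⟩ := hz
    obtain ⟨U, hU, rfl⟩ := isOpen_induced_iff.1 hV
    refine ⟨U, hU, hzV, ?_⟩
    rintro y ⟨hy, hyA⟩
    exact hVB (show (⟨y, hyA⟩ : A) ∈ Subtype.val ⁻¹' U from hy)
  · rintro ⟨hxA, U, hU, hxU, hUB⟩
    refine ⟨⟨x, hxA⟩, ?_, rfl⟩
    rw [mem_interior]
    exact ⟨Subtype.val ⁻¹' U, fun z hz => hUB ⟨hz, z.2⟩, hU.preimage continuous_subtype_val, hxU⟩

theorem mem_Xseq_succ (u : StoneCech ℕ) (α : Ordinal) (x : Su u) :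
    x ∈ Xseq u (α + 1) ↔ x ∈ Xseq u α ∧
      ∀ U : Set (Su u), IsOpen U → x ∈ U → ∃ z ∈ U, z ∈ Xseq u α ∧ fu u z ≠ fu u x := by
  have h : Xseq u (α + 1) = Xseq u α \ ⋃ t : unitInterval,
      relInt (Xseq u α) (Xseq u α ∩ fu u ⁻¹' {t}) := by
    simp [Xseq]
  rw [h]
  simp only [mem_sdiff, mem_iUnion, mem_relInt_iff, not_exists]
  refine and_congr_right fun hx => ?_
  constructor
  · intro H U hU hxU
    by_contra hc
    push Not at hc
    exact H (fu u x) ⟨hx, U, hU, hxU, fun z hz => ⟨hz.2, hc z hz.1 hz.2⟩⟩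
  · rintro H t ⟨_, U, hU, hxU, hUB⟩
    obtain ⟨z, hzU, hzX, hne⟩ := H U hU hxU
    have h1 : fu u z = t := (hUB ⟨hzU, hzX⟩).2
    have h2 : fu u x = t := (hUB ⟨hxU, hx⟩).2
    exact hne (h1.trans h2.symm)

theorem mem_Xseq_limit (u : StoneCech ℕ) (o : Ordinal) (ho : Order.IsSuccLimit o) (x : Su u) :
    x ∈ Xseq u o ↔ ∀ β < o, x ∈ Xseq u β := by
  have h : Xseq u o = ⋂ (β : {β : Ordinal // β < o}), Xseq u β.1 := by
    unfold Xseq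
    rw [Ordinal.limitRecOn_limit _ _ _ _ ho]
  rw [h]
  simp

theorem Xseq_isClosed (u : StoneCech ℕ) (α : Ordinal) : IsClosed (Xseq u α) := by
  induction α using Ordinal.limitRecOn with
  | zero => rw [Xseq_zero]; exact isClosed_univ
  | add_one α ih =>
    rw [← isOpen_compl_iff, isOpen_iff_mem_nhds]
    intro x hx
    by_cases hxa : x ∈ Xseq u α
    · rw [mem_compl_iff, mem_Xseq_succ] at hx
      push Not at hx
      obtain ⟨U, hU, hxU, H⟩ := hx hxa
      refine Filter.mem_of_superset (hU.mem_nhds hxU) ?_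
      intro z hz hzX
      rw [mem_Xseq_succ] at hzX
      obtain ⟨w, hwU, hwX, hne⟩ := hzX.2 U hU hz
      exact hne ((H w hwU hwX).trans (H z hz hzX.1).symm)
    · refine Filter.mem_of_superset (ih.isOpen_compl.mem_nhds hxa) ?_
      intro z hz hzX
      exact hz ((mem_Xseq_succ u α z).1 hzX).1
  | limit o ho ih =>
    have : Xseq u o = ⋂ β : Ordinal, ⋂ _ : β < o, Xseq u β := by
      ext x; rw [mem_Xseq_limit u o ho]; simp
    rw [this]
    exact isClosed_iInter fun β => isClosed_iInter fun hβ => ih β hβ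

theorem Xseq_anti (u : StoneCech ℕ) (α : Ordinal) : ∀ β ≤ α, Xseq u α ⊆ Xseq u β := by
  induction α using Ordinal.limitRecOn with
  | zero => intro β hβ; rw [nonpos_iff_eq_zero.1 hβ]
  | add_one α ih =>
    intro β hβ
    rcases hβ.lt_or_eq with h | h
    · exact fun x hx => ih β (Order.lt_add_one_iff.1 h) ((mem_Xseq_succ u α x).1 hx).1
    · rw [h]
  | limit o ho ih =>
    intro β hβ
    rcases hβ.lt_or_eq with h | h
    · exact fun x hx => (mem_Xseq_limit u o ho x).1 hx β h
    · rw [h]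

theorem continuous_betaF : Continuous betaF := continuous_stoneCechExtend _
theorem continuous_betaPi : Continuous betaPi := continuous_stoneCechExtend _
theorem continuous_fu (u : StoneCech ℕ) : Continuous (fu u) :=
  continuous_betaF.comp continuous_subtype_val

theorem betaF_unit (p : bS) : betaF (stoneCechUnit p) = p.2.1 := by
  simp [betaF]
theorem betaPi_unit (p : bS) : betaPi (stoneCechUnit p) = stoneCechUnit p.1 := by
  simp [betaPi]

/-- The map of `β𝐒` induced by a map of the first coordinate. -/
def betaMap (k : C(unitInterval, unitInterval)) : StoneCech bS → StoneCech bS :=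
  stoneCechExtend (g := fun p : bS => stoneCechUnit ((p.1, (k p.2.1, p.2.2)) : bS))
    (continuous_stoneCechUnit.comp (by fun_prop))

theorem continuous_betaMap (k : C(unitInterval, unitInterval)) : Continuous (betaMap k) :=
  continuous_stoneCechExtend _

theorem betaMap_unit (k : C(unitInterval, unitInterval)) (p : bS) :
    betaMap k (stoneCechUnit p) = stoneCechUnit ((p.1, (k p.2.1, p.2.2)) : bS) := by
  simp [betaMap]

theorem betaPi_betaMap (k : C(unitInterval, unitInterval)) (z : StoneCech bS) :
    betaPi (betaMap k z) = betaPi z := by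
  have : betaPi ∘ betaMap k = betaPi := by
    apply stoneCech_hom_ext (continuous_betaPi.comp (continuous_betaMap k)) continuous_betaPi
    ext p
    simp [betaMap_unit, betaPi_unit]
  exact congrFun this z

theorem betaF_betaMap (k : C(unitInterval, unitInterval)) (z : StoneCech bS) :
    betaF (betaMap k z) = k (betaF z) := by
  have : betaF ∘ betaMap k = k ∘ betaF := by
    apply stoneCech_hom_ext (continuous_betaF.comp (continuous_betaMap k))
      (k.continuous.comp continuous_betaF)
    ext p
    simp [betaMap_unit, betaF_unit]
  exact congrFun this z

/-- The induced map of `S_u`. -/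
def uMap (u : StoneCech ℕ) (k : C(unitInterval, unitInterval)) (z : Su u) : Su u :=
  ⟨betaMap k z.1, by
    have := z.2
    simp only [Su, mem_preimage, mem_singleton_iff] at this ⊢
    rw [betaPi_betaMap, this]⟩

theorem continuous_uMap (u : StoneCech ℕ) (k : C(unitInterval, unitInterval)) :
    Continuous (uMap u k) :=
  Continuous.subtype_mk ((continuous_betaMap k).comp continuous_subtype_val) _

theorem fu_uMap (u : StoneCech ℕ) (k : C(unitInterval, unitInterval)) (z : Su u) :
    fu u (uMap u k z) = k (fu u z) := betaF_betaMap k z.1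

section tent
variable (k : C(unitInterval, unitInterval)) (j : Bool → C(unitInterval, unitInterval))

theorem uMap_section (u : StoneCech ℕ) (h1 : ∀ i v, k (j i v) = v) (i : Bool) (z : Su u) :
    uMap u k (uMap u (j i) z) = z := by
  have : betaMap k ∘ betaMap (j i) = id := by
    apply stoneCech_hom_ext ((continuous_betaMap k).comp (continuous_betaMap _)) continuous_id
    ext p
    simp [betaMap_unit, h1]
  exact Subtype.ext (congrFun this z.1)

theorem uMap_cover (u : StoneCech ℕ) (h2 : ∀ s, ∃ i, j i (k s) = s) (z : Su u) :
    ∃ i, uMap u (j i) (uMap u k z) = z := by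
  have hcl : IsClosed {w : StoneCech bS | ∃ i, betaMap (j i) (betaMap k w) = w} := by
    have : {w : StoneCech bS | ∃ i, betaMap (j i) (betaMap k w) = w} =
      ⋃ i, {w : StoneCech bS | betaMap (j i) (betaMap k w) = w} := by ext; simp
    rw [this]
    exact isClosed_iUnion_of_finite fun i =>
      isClosed_eq ((continuous_betaMap _).comp (continuous_betaMap _)) continuous_id
  have hall := denseRange_stoneCechUnit.induction_on (p := fun w : StoneCech bS =>
    ∃ i, betaMap (j i) (betaMap k w) = w) z.1 hcl (by
      intro p
      obtain ⟨i, hi⟩ := h2 p.2.1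
      exact ⟨i, by simp [betaMap_unit, hi]⟩)
  obtain ⟨i, hi⟩ := hall
  exact ⟨i, Subtype.ext hi⟩

theorem uMap_Xseq (u : StoneCech ℕ) (h1 : ∀ i v, k (j i v) = v)
    (h2 : ∀ s, ∃ i, j i (k s) = s) (α : Ordinal) :
    ∀ x : Su u, uMap u k x ∈ Xseq u α ↔ x ∈ Xseq u α := by
  induction α using Ordinal.limitRecOn with
  | zero => simp [Xseq_zero]
  | limit o ho ih =>
    intro x
    rw [mem_Xseq_limit u o ho, mem_Xseq_limit u o ho]
    exact forall₂_congr fun β hβ => ih β hβ x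
  | add_one α ih =>
    intro x
    rw [mem_Xseq_succ, mem_Xseq_succ, ih x]
    refine and_congr_right fun hx => ?_
    constructor
    · intro H U hU hxU
      obtain ⟨i, hi⟩ := uMap_cover k j u h2 x
      obtain ⟨z, hzU, hzX, hne⟩ := H (uMap u (j i) ⁻¹' U) (hU.preimage (continuous_uMap u _))
        (by rw [mem_preimage, hi]; exact hxU)
      refine ⟨uMap u (j i) z, hzU, ?_, ?_⟩
      · rw [← ih, uMap_section k j u h1]; exact hzX
      · intro h
        apply hne
        rw [fu_uMap, ← h, fu_uMap, h1]
    · intro H V hV hxV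
      set s := fu u x with hs
      let D : Set unitInterval := (range fun i => j i (k s)) \ {s}
      have hD : D.Finite := (finite_range _).subset sdiff_subset
      obtain ⟨z, ⟨hzV, hzD⟩, hzX, hne⟩ := H (uMap u k ⁻¹' V ∩ fu u ⁻¹' Dᶜ)
        ((hV.preimage (continuous_uMap u k)).inter
          (hD.isClosed.isOpen_compl.preimage (continuous_fu u)))
        ⟨hxV, fun h => h.2 rfl⟩
      refine ⟨uMap u k z, hzV, (ih z).2 hzX, ?_⟩
      rw [fu_uMap, fu_uMap]
      intro h
      apply hzD
      obtain ⟨i, hi⟩ := h2 (fu u z)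
      exact ⟨⟨i, by rw [← hi, h]⟩, hne⟩

/-- The set of levels where something is removed. -/
def Tset (u : StoneCech ℕ) (α : Ordinal) : Set unitInterval :=
  {t | ∃ x ∈ Xseq u α, x ∉ Xseq u (α + 1) ∧ fu u x = t}

theorem Tset_iff (u : StoneCech ℕ) (h1 : ∀ i v, k (j i v) = v)
    (h2 : ∀ s, ∃ i, j i (k s) = s) (α : Ordinal) (s : unitInterval) :
    k s ∈ Tset u α ↔ s ∈ Tset u α := by
  constructor
  · rintro ⟨y, hy, hy', hys⟩
    obtain ⟨i, hi⟩ := h2 s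
    refine ⟨uMap u (j i) y, ?_, ?_, ?_⟩
    · rw [← uMap_Xseq k j u h1 h2, uMap_section k j u h1]; exact hy
    · rw [← uMap_Xseq k j u h1 h2, uMap_section k j u h1]; exact hy'
    · rw [fu_uMap, hys, hi]
  · rintro ⟨x, hx, hx', rfl⟩
    exact ⟨uMap u k x, (uMap_Xseq k j u h1 h2 _ _).2 hx,
      fun h => hx' ((uMap_Xseq k j u h1 h2 _ _).1 h), fu_uMap _ _ _⟩
end tent

theorem exists_tent (a : unitInterval) (h0 : 0 < a) (h1 : a < 1) :
    ∃ (k : C(unitInterval, unitInterval)) (j : Bool → C(unitInterval, unitInterval)),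
      (∀ i v, k (j i v) = v) ∧ (∀ s, ∃ i, j i (k s) = s) ∧ k 0 = 0 ∧ k 1 = 0 ∧ k a = 1 := by
  have ha0 : (0 : ℝ) < a := h0
  have ha1 : (a : ℝ) < 1 := h1
  have hb : (0 : ℝ) < 1 - a := by linarith
  have hk : ∀ x : unitInterval, min ((x : ℝ) / a) ((1 - x) / (1 - a)) ∈ Icc (0 : ℝ) 1 := by
    intro x
    have := x.2.1
    have := x.2.2
    refine ⟨le_min (by positivity) (div_nonneg (by linarith) hb.le), ?_⟩
    rcases le_total (x : ℝ) a with h | h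
    · exact (min_le_left _ _).trans ((div_le_one ha0).2 h)
    · exact (min_le_right _ _).trans ((div_le_one hb).2 (by linarith))
  have hj1 : ∀ x : unitInterval, (a : ℝ) * x ∈ Icc (0 : ℝ) 1 := by
    intro x
    have := x.2.1
    have := x.2.2
    exact ⟨by positivity, by nlinarith⟩
  have hj2 : ∀ x : unitInterval, 1 - (1 - (a : ℝ)) * x ∈ Icc (0 : ℝ) 1 := by
    intro x
    have := x.2.1
    have := x.2.2
    exact ⟨by nlinarith, by nlinarith⟩
  refine ⟨⟨fun x => ⟨_, hk x⟩, by fun_prop⟩,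
    fun i => if i then ⟨fun x => ⟨_, hj1 x⟩, by fun_prop⟩ else ⟨fun x => ⟨_, hj2 x⟩, by fun_prop⟩,
    ?_, ?_, ?_, ?_, ?_⟩
  · intro i v
    have h0 := v.2.1
    have h1 := v.2.2
    apply Subtype.ext
    cases i
    · simp only [Bool.false_eq_true, if_false, ContinuousMap.coe_mk]
      have e : (1 - (1 - (1 - (a : ℝ)) * v)) / (1 - a) = v := by field_simp; ring
      rw [e, min_eq_right]
      rw [le_div_iff₀ ha0]; nlinarith
    · simp only [if_true, ContinuousMap.coe_mk]
      have e : (a : ℝ) * v / a = v := by field_simp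
      rw [e, min_eq_left]
      rw [le_div_iff₀ hb]; nlinarith
  · intro s
    have h0 := s.2.1
    have h1 := s.2.2
    rcases le_total (s : ℝ) a with h | h
    · refine ⟨true, Subtype.ext ?_⟩
      simp only [if_true, ContinuousMap.coe_mk]
      rw [min_eq_left]
      · field_simp
      · rw [div_le_div_iff₀ ha0 hb]; nlinarith
    · refine ⟨false, Subtype.ext ?_⟩
      simp only [Bool.false_eq_true, if_false, ContinuousMap.coe_mk]
      rw [min_eq_right]
      · field_simp; ring
      · rw [div_le_div_iff₀ hb ha0]; nlinarith
  · apply Subtype.ext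
    simp [hb.le]
  · apply Subtype.ext
    simp [ha0.le]
  · apply Subtype.ext
    simp [div_self ha0.ne', div_self hb.ne']

theorem Tset_univ (u : StoneCech ℕ) (α : Ordinal) (h : (Tset u α).Nonempty) (t : unitInterval) :
    t ∈ Tset u α := by
  have key : ∀ s : unitInterval, s ∈ Tset u α ↔ (1 : unitInterval) ∈ Tset u α := by
    have mid : ∀ s : unitInterval, 0 < s → s < 1 →
        ((s ∈ Tset u α ↔ (1 : unitInterval) ∈ Tset u α) ∧
        ((0 : unitInterval) ∈ Tset u α ↔ (1 : unitInterval) ∈ Tset u α)) := by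
      intro s h0 h1
      obtain ⟨k, j, hj1, hj2, hk0, hk1, hka⟩ := exists_tent s h0 h1
      have e1 := Tset_iff k j u hj1 hj2 α s
      have e2 := Tset_iff k j u hj1 hj2 α 1
      rw [hka] at e1
      rw [hk1] at e2
      exact ⟨e1.symm, e2⟩
    intro s
    rcases eq_or_lt_of_le (show 0 ≤ s from s.2.1) with h0 | h0
    · obtain ⟨m, hm0, hm1⟩ := exists_between (show (0 : unitInterval) < 1 from zero_lt_one)
      rw [← h0]
      exact (mid m hm0 hm1).2
    · rcases eq_or_lt_of_le (show s ≤ 1 from s.2.2) with h1 | h1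
      · rw [h1]
      · exact (mid s h0 h1).1
  obtain ⟨s, hs⟩ := h
  exact (key t).2 ((key s).1 hs)

theorem Tset_nonempty (u : StoneCech ℕ) (α : Ordinal) (h : Xseq u α ≠ Xseq u (α + 1)) :
    (Tset u α).Nonempty := by
  by_contra hc
  apply h
  refine Subset.antisymm ?_ (Xseq_anti u _ _ (Order.lt_add_one_iff.2 le_rfl).le)
  intro x hx
  by_contra hx'
  exact hc ⟨_, x, hx, hx', rfl⟩

theorem isFSigma_lt {Y : Type*} [TopologicalSpace Y] (p q : Y → ℝ) (hp : Continuous p)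
    (hq : Continuous q) : IsFSigma {z | p z < q z} := by
  refine ⟨fun n => {z | p z + 1 / ((n : ℝ) + 1) ≤ q z}, fun n => isClosed_le (by fun_prop) hq, ?_⟩
  ext z
  simp only [mem_ofPred_eq, mem_iUnion]
  constructor
  · intro h
    obtain ⟨n, hn⟩ := exists_nat_one_div_lt (sub_pos.2 h)
    exact ⟨n, by linarith⟩
  · rintro ⟨n, hn⟩
    have : 0 < 1 / ((n : ℝ) + 1) := by positivity
    linarith

theorem F_lemma {Y : Type*} [TopologicalSpace Y] [CompactSpace Y] [T2Space Y]
    (hF : IsFSpace Y) (f : Y → unitInterval) (hf : Continuous f)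
    (x : ℕ → Y) (hx : ∀ n, (f (x n) : ℝ) = 1 - (1 / 2) ^ n)
    (U : ℕ → Set Y) (hU : ∀ n, IsOpen (U n)) (hxU : ∀ n, x n ∈ U n) (y : Y)
    (hy : MapClusterPt y Filter.atTop x) :
    ∃ W, IsOpen W ∧ y ∈ W ∧ ∀ z ∈ W, f z ≠ 1 → ∃ n, z ∈ U n := by
  have hg : ∀ n, ∃ g : C(Y, ℝ), EqOn g 0 (U n)ᶜ ∧ EqOn g 1 {x n} ∧ ∀ z, g z ∈ Icc (0 : ℝ) 1 :=
    fun n => exists_continuous_zero_one_of_isClosed (hU n).isClosed_compl isClosed_singleton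
      (by simpa using hxU n)
  choose g hg0 hg1 hg2 using hg
  let G : Y → ℝ := fun z => ∑' n, (1 / 2 : ℝ) ^ n * g n z
  have hb : ∀ n z, ‖(1 / 2 : ℝ) ^ n * g n z‖ ≤ (1 / 2 : ℝ) ^ n := by
    intro n z
    rw [Real.norm_of_nonneg (mul_nonneg (by positivity) (hg2 n z).1)]
    exact mul_le_of_le_one_right (by positivity) (hg2 n z).2
  have hG : Continuous G :=
    continuous_tsum (fun n => by fun_prop) summable_geometric_two hb
  have hsum : ∀ z, Summable fun n => (1 / 2 : ℝ) ^ n * g n z := fun z =>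
    Summable.of_norm_bounded summable_geometric_two (fun n => hb n z)
  have hfc : Continuous fun z => (f z : ℝ) := by fun_prop
  let A : Set Y := {z | 2 / 3 * (1 - (f z : ℝ)) < G z}
  let B : Set Y := {z | G z < 1 / 2 * (1 - (f z : ℝ))}
  have hAB : Disjoint (closure A) (closure B) := by
    apply hF A B (isOpen_lt (by fun_prop) hG) (isOpen_lt hG (by fun_prop))
      (isFSigma_lt _ _ (by fun_prop) hG) (isFSigma_lt _ _ hG (by fun_prop))
    rw [Set.disjoint_left]
    intro z hzA hzB
    have h1 : 2 / 3 * (1 - (f z : ℝ)) < G z := hzA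
    have h2 : G z < 1 / 2 * (1 - (f z : ℝ)) := hzB
    have := (f z).2.2
    linarith
  have hxA : ∀ n, x n ∈ A := by
    intro n
    have h1 : (1 / 2 : ℝ) ^ n * g n (x n) ≤ G (x n) :=
      (hsum (x n)).le_tsum n (fun m _ => mul_nonneg (by positivity) (hg2 m _).1)
    have h2 : g n (x n) = 1 := hg1 n rfl
    have h3 : (0 : ℝ) < (1 / 2) ^ n := by positivity
    change 2 / 3 * (1 - (f (x n) : ℝ)) < G (x n)
    rw [hx]
    rw [h2] at h1
    linarith
  have hyA : y ∈ closure A := by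
    rw [mem_closure_iff_nhds]
    intro V hV
    obtain ⟨n, hn⟩ := (hy.frequently hV).exists
    exact ⟨x n, hn, hxA n⟩
  refine ⟨(closure B)ᶜ, isClosed_closure.isOpen_compl, Set.disjoint_left.1 hAB hyA, ?_⟩
  intro z hz hz1
  by_contra hc
  push Not at hc
  apply hz
  apply subset_closure
  change G z < 1 / 2 * (1 - (f z : ℝ))
  have : G z = 0 := by
    have : ∀ n, (1 / 2 : ℝ) ^ n * g n z = 0 := fun n => by
      rw [hg0 n (hc n)]; simp
    simp only [G, this, tsum_zero]
  rw [this]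
  have h1 : (f z : ℝ) < 1 := lt_of_le_of_ne (f z).2.2 (fun h => hz1 (Subtype.ext h))
  linarith

theorem step_lemma (u : StoneCech ℕ) (hcomp : IsCompact (Su u)) (hFsp : IsFSpace (Su u))
    (a : ℕ → Ordinal) (ha : Monotone a) (hT : ∀ n, Xseq u (a n) ≠ Xseq u (a n + 1)) :
    ∃ y : Su u, (∀ n, y ∈ Xseq u (a n)) ∧
      (∀ n, (∀ m, a m = a n) → y ∈ Xseq u (a n + 1)) ∧
      (∀ l, (∀ n, a n + 1 ≤ l) → y ∉ Xseq u (l + 1)) := by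
  haveI : CompactSpace (Su u) := isCompact_iff_compactSpace.1 hcomp
  let t : ℕ → unitInterval := fun n => ⟨1 - (1 / 2) ^ n, by
    have h1 : (0 : ℝ) < (1 / 2) ^ n := by positivity
    have h2 : ((1 : ℝ) / 2) ^ n ≤ 1 := pow_le_one₀ (by norm_num) (by norm_num)
    exact ⟨by linarith, by linarith⟩⟩
  have hpt : ∀ n, t n ∈ Tset u (a n) := fun n => Tset_univ u _ (Tset_nonempty u _ (hT n)) _
  choose x hx hx' hxt using hpt
  have hUex : ∀ n, ∃ U : Set (Su u), IsOpen U ∧ x n ∈ U ∧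
      ∀ z ∈ U, z ∈ Xseq u (a n) → fu u z = fu u (x n) := by
    intro n
    have := hx' n
    rw [mem_Xseq_succ] at this
    push Not at this
    exact this (hx n)
  choose U hU hxU hUX using hUex
  have hUX' : ∀ n, ∀ z ∈ U n, z ∉ Xseq u (a n + 1) := by
    intro n z hz hzX
    rw [mem_Xseq_succ] at hzX
    obtain ⟨w, hw, hwX, hne⟩ := hzX.2 _ (hU n) hz
    exact hne ((hUX n w hw hwX).trans (hUX n z hz hzX.1).symm)
  obtain ⟨y, hy⟩ := exists_clusterPt_of_compactSpace (Filter.map x Filter.atTop)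
  have hy : MapClusterPt y Filter.atTop x := hy
  have hfy : fu u y = 1 := by
    have ht : Filter.Tendsto (fu u ∘ x) Filter.atTop (𝓝 1) := by
      rw [tendsto_subtype_rng]
      have e : (fun n => ((fu u ∘ x) n : ℝ)) = fun n => 1 - (1 / 2 : ℝ) ^ n := by
        ext n; simp only [Function.comp, hxt]; rfl
      rw [e]
      have := (tendsto_pow_atTop_nhds_zero_of_lt_one (r := (1 / 2 : ℝ))
        (by norm_num) (by norm_num)).const_sub 1
      simpa using this
    have h1 : MapClusterPt (fu u y) Filter.atTop (fu u ∘ x) :=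
      hy.continuousAt_comp (continuous_fu u).continuousAt
    exact eq_of_nhds_neBot (Filter.NeBot.mono h1 (inf_le_inf_left _ ht))
  have hlt : ∀ n, fu u (x n) ≠ 1 := by
    intro n h
    rw [hxt] at h
    have h1 : (1 : ℝ) - (1 / 2) ^ n = 1 := congrArg Subtype.val h
    have h3 : (0 : ℝ) < (1 / 2) ^ n := by positivity
    linarith
  obtain ⟨W, hW, hyW, hWU⟩ := F_lemma hFsp (fu u) (continuous_fu u) x
    (fun n => by rw [hxt]) U hU hxU y hy
  have hyX : ∀ n, y ∈ Xseq u (a n) := by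
    intro n
    rw [← (Xseq_isClosed u (a n)).closure_eq, mem_closure_iff_nhds]
    intro V hV
    obtain ⟨m, hm, hmn⟩ := ((hy.frequently hV).and_eventually (Filter.eventually_ge_atTop n)).exists
    exact ⟨x m, hm, Xseq_anti u _ _ (ha hmn) (hx m)⟩
  refine ⟨y, hyX, ?_, ?_⟩
  · intro n hn
    rw [mem_Xseq_succ]
    refine ⟨hyX n, ?_⟩
    intro V hV hyV
    obtain ⟨m, hm⟩ := (hy.frequently (hV.mem_nhds hyV)).exists
    refine ⟨x m, hm, ?_, ?_⟩
    · rw [← hn m]; exact hx m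
    · rw [hfy]; exact hlt m
  · intro l hl hyl
    rw [mem_Xseq_succ] at hyl
    obtain ⟨z, hzW, hzX, hne⟩ := hyl.2 W hW hyW
    rw [hfy] at hne
    obtain ⟨n, hn⟩ := hWU z hzW hne
    exact hUX' n z hn (Xseq_anti u _ _ (hl n) hzX)

theorem base_lemma (u : StoneCech ℕ) (hu : ∀ n : ℕ, u ≠ stoneCechUnit n) :
    Xseq u 0 ≠ Xseq u (0 + 1) := by
  let g : bS → unitInterval := fun p => projIcc 0 1 zero_le_one (1 - (p.1 : ℝ) * (p.2.1 : ℝ))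
  have hg : Continuous g := by
    apply continuous_projIcc.comp
    have : Continuous fun n : ℕ => (n : ℝ) := continuous_of_discreteTopology
    fun_prop
  let G : StoneCech bS → unitInterval := stoneCechExtend hg
  have hGc : Continuous G := continuous_stoneCechExtend hg
  have hGu : ∀ p, G (stoneCechUnit p) = g p := fun p => by simp [G]
  let e : ℕ → StoneCech bS := fun n => stoneCechUnit ((n, (0, 0)) : bS)
  have he : Continuous e := continuous_of_discreteTopology
  let E : StoneCech ℕ → StoneCech bS := stoneCechExtend he
  have hEc : Continuous E := continuous_stoneCechExtend he
  have hEu : ∀ n, E (stoneCechUnit n) = stoneCechUnit ((n, (0, 0)) : bS) := fun n => by simp [E, e]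
  have h1 : betaPi ∘ E = id := by
    apply stoneCech_hom_ext (continuous_betaPi.comp hEc) continuous_id
    ext n
    simp [hEu, betaPi_unit]
  have h2 : betaF ∘ E = fun _ => 0 := by
    apply stoneCech_hom_ext (continuous_betaF.comp hEc) continuous_const
    ext n
    simp [hEu, betaF_unit]
  have h3 : G ∘ E = fun _ => 1 := by
    apply stoneCech_hom_ext (hGc.comp hEc) continuous_const
    ext n
    simp [hEu, hGu, g]
  let z : Su u := ⟨E u, congrFun h1 u⟩
  have hz0 : fu u z = 0 := congrFun h2 u
  have hz1 : G z.1 = 1 := congrFun h3 u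
  intro heq
  have hz : z ∈ Xseq u (0 + 1) := by rw [← heq, Xseq_zero]; trivial
  rw [mem_Xseq_succ] at hz
  obtain ⟨w, hwU, -, hne⟩ := hz.2 {w | 0 < G w.1}
    (isOpen_lt continuous_const (hGc.comp continuous_subtype_val))
    (by simp [hz1])
  rw [hz0] at hne
  have hwF : (0 : unitInterval) < betaF w.1 := lt_of_le_of_ne (betaF w.1).2.1 (Ne.symm hne)
  obtain ⟨ε, hε0, hε⟩ := exists_between hwF
  have hε0' : (0 : ℝ) < ε := hε0
  obtain ⟨N, hN⟩ := exists_nat_gt (1 / (ε : ℝ))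
  let O : Set (StoneCech bS) := {q | 0 < G q} ∩ {q | ε < betaF q}
  have hO : IsOpen O := (isOpen_lt continuous_const hGc).inter
    (isOpen_lt continuous_const continuous_betaF)
  let C : Set (StoneCech ℕ) := stoneCechUnit '' (Set.Iio N)
  have hC : IsClosed C := ((Set.finite_Iio N).image _).isClosed
  have hwC : w.1 ∈ betaPi ⁻¹' C := by
    rw [← (hC.preimage continuous_betaPi).closure_eq, mem_closure_iff]
    intro V hV hwV
    obtain ⟨p, hpV, hpG, hpF⟩ := denseRange_stoneCechUnit.exists_mem_open (hV.inter hO)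
      ⟨w.1, hwV, hwU, hε⟩
    refine ⟨stoneCechUnit p, hpV, ?_⟩
    rw [mem_preimage, betaPi_unit]
    refine ⟨p.1, ?_, rfl⟩
    simp only [mem_ofPred_eq, hGu, betaF_unit] at hpG hpF
    by_contra hge
    have hge : (N : ℝ) ≤ p.1 := by exact_mod_cast not_lt.1 hge
    have hpF' : (ε : ℝ) < p.2.1 := hpF
    have h4 : 1 < (N : ℝ) * ε := (div_lt_iff₀ hε0').1 hN
    have h5 : 1 - (p.1 : ℝ) * (p.2.1 : ℝ) ≤ 0 := by
      have : (N : ℝ) * ε ≤ p.1 * p.2.1 := by gcongr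
      linarith
    have : g p = 0 := projIcc_of_le_left _ h5
    rw [this] at hpG
    exact lt_irrefl _ hpG
  obtain ⟨n, -, hn⟩ := hwC
  have hw2 : betaPi w.1 = u := w.2
  exact hu n (by rw [← hw2, hn])

theorem exists_seq_of_cof_le (δ : Ordinal) (h0 : δ ≠ 0) (h : δ.cof ≤ Cardinal.aleph0) :
    ∃ a : ℕ → Ordinal, Monotone a ∧ (∀ n, a n < δ) ∧ ∀ β < δ, ∃ n, β ≤ a n := by
  rw [← Ordinal.cof_toType] at h
  obtain ⟨s, hs, hsc⟩ := Order.exists_cof_eq δ.ToType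
  rw [← hsc, Cardinal.le_aleph0_iff_set_countable] at h
  haveI : Nonempty δ.ToType := Ordinal.nonempty_toType_iff.2 h0
  have hsn : s.Nonempty := by
    obtain ⟨b, hb, _⟩ := hs (Classical.arbitrary _)
    exact ⟨b, hb⟩
  obtain ⟨e, he⟩ := h.exists_eq_range hsn
  let b : ℕ → Ordinal := fun n => Ordinal.typein (α := δ.ToType) (· < ·) (e n)
  refine ⟨partialSups b, (partialSups b).monotone, ?_, ?_⟩
  · intro n
    rw [partialSups_apply, Finset.sup'_lt_iff]
    intro i _
    simpa using Ordinal.typein_lt_type (α := δ.ToType) (· < ·) (e i)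
  · intro β hβ
    obtain ⟨q, hq⟩ := Ordinal.typein_surj (α := δ.ToType) (· < ·) (o := β) (by simpa using hβ)
    obtain ⟨r, hr, hqr⟩ := hs q
    rw [he] at hr
    obtain ⟨n, rfl⟩ := hr
    refine ⟨n, le_trans ?_ (le_partialSups b n)⟩
    rw [← hq]
    exact (Ordinal.typein_le_typein (α := δ.ToType) (· < ·)).2 (not_lt.2 hqr)

/-- The least ordinal `δ` with `X_δ = X_{δ+1}` has uncountable cofinality; in
particular the supremum of any strictly increasing sequence of ordinals below `δ`
is again below `δ`. -/
theorem delta_uncountable_cofinality (u : StoneCech ℕ)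
    (hu : ∀ n : ℕ, u ≠ stoneCechUnit n)
    (hne : (Su u).Nonempty) (hcomp : IsCompact (Su u)) (hconn : IsConnected (Su u))
    (hFsp : IsFSpace (Su u))
    (hP : ∀ s r : unitInterval, s < r → IsConnected (Pset u s r))
    (δ : Ordinal) (hδ : Xseq u δ = Xseq u (δ + 1))
    (hmin : ∀ β < δ, Xseq u β ≠ Xseq u (β + 1)) :
    Cardinal.aleph0 < δ.cof ∧
    ∀ g : ℕ → Ordinal, StrictMono g → (∀ n, g n < δ) → (⨆ n, g n) < δ := by
  have hlim : Order.IsSuccLimit δ := by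
    rcases Ordinal.zero_or_succ_or_isSuccLimit δ with h | ⟨α, h⟩ | h
    · subst h
      exact absurd hδ (base_lemma u hu)
    · exfalso
      have h : δ = α + 1 := h.symm
      subst h
      obtain ⟨y, -, h2, h3⟩ := step_lemma u hcomp hFsp (fun _ => α) monotone_const
        (fun _ => hmin α (Order.lt_add_one_iff.2 le_rfl))
      have := h2 0 (fun _ => rfl)
      rw [hδ] at this
      exact h3 (α + 1) (fun _ => le_rfl) this
    · exact h
  have key : ∀ a : ℕ → Ordinal, Monotone a → (∀ n, a n < δ) → ¬ ∀ β < δ, ∃ n, β ≤ a n := by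
    intro a ha had hcof
    obtain ⟨y, h1, -, h3⟩ := step_lemma u hcomp hFsp a ha (fun n => hmin _ (had n))
    apply h3 δ (fun n => Order.add_one_le_of_lt (had n))
    rw [← hδ, mem_Xseq_limit u δ hlim]
    intro β hβ
    obtain ⟨n, hn⟩ := hcof β hβ
    exact Xseq_anti u _ _ hn (h1 n)
  constructor
  · by_contra hc
    obtain ⟨a, h1, h2, h3⟩ := exists_seq_of_cof_le δ hlim.ne_bot (not_lt.1 hc)
    exact key a h1 h2 h3
  · intro g hg hgd
    have hk := key g hg.monotone hgd
    push Not at hk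
    obtain ⟨β, hβ, hn⟩ := hk
    exact lt_of_le_of_lt (ciSup_le' fun n => (hn n).le) hβ

end
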